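/- arXiv:2002.08621 — 4 statements merged into one kernel-verified Lean document; each statement's English description precedes it below -/
import Mathlib

section
/- Let p, q ∈ ℝᵏ be strictly positive probability vectors on a finite set X of k points. Define on X×X the mixtures M⁺(x,y) = (p(x)p(y)+q(x)q(y))/2, M⁻(x,y) = (p(x)q(y)+q(x)p(y))/2, M(x,y) = (M⁺(x,y)+M⁻(x,y))/2, and F(x,y) = p(x)p(y)+q(x)q(y)−p(x)q(y)−q(x)p(y). Let D*(x,y) = M⁺(x,y)/(2·M(x,y)). Then Σ_{x,y} F(x,y)·log D*(x,y) = 4·( KL(M⁺‖M) + KL(M‖M⁺) ), where for probability vectors f, g on X×X with g strictly positive, KL(f‖g) = Σ_{x,y} f(x,y)·log(f(x,y)/g(x,y)). -/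
open scoped BigOperators

theorem stmt3 {k : ℕ} (p q : Fin k → ℝ)
    (hp : ∀ x, 0 < p x) (hpsum : ∑ x, p x = 1)
    (hq : ∀ x, 0 < q x) (hqsum : ∑ x, q x = 1) :
    let Mp : Fin k → Fin k → ℝ := fun x y => (p x * p y + q x * q y) / 2
    let Mm : Fin k → Fin k → ℝ := fun x y => (p x * q y + q x * p y) / 2
    let M : Fin k → Fin k → ℝ := fun x y => (Mp x y + Mm x y) / 2
    let F : Fin k → Fin k → ℝ := fun x y =>
      p x * p y + q x * q y - p x * q y - q x * p y
    let Dstar : Fin k → Fin k → ℝ := fun x y => Mp x y / (2 * M x y)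
    ∑ x, ∑ y, F x y * Real.log (Dstar x y)
      = 4 * ((∑ x, ∑ y, Mp x y * Real.log (Mp x y / M x y))
          + (∑ x, ∑ y, M x y * Real.log (M x y / Mp x y))) := by
  intro Mp Mm M F Dstar
  have hF : ∑ x, ∑ y, F x y * Real.log 2 = 0 := by
    have h : ∀ x y, F x y * Real.log 2 = ((p x - q x) * Real.log 2) * (p y - q y) := by
      intro x y
      simp only [F]
      ring
    simp only [h, ← Finset.mul_sum, Finset.sum_sub_distrib, hpsum, hqsum]
    simp
  have key : ∀ x y, F x y * Real.log (Dstar x y)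
      = 4 * (Mp x y * Real.log (Mp x y / M x y) + M x y * Real.log (M x y / Mp x y))
        - F x y * Real.log 2 := by
    intro x y
    have h1 := mul_pos (hp x) (hp y)
    have h2 := mul_pos (hq x) (hq y)
    have h3 := mul_pos (hp x) (hq y)
    have h4 := mul_pos (hq x) (hp y)
    have hMp : 0 < Mp x y := by simp only [Mp]; linarith
    have hMm : 0 < Mm x y := by simp only [Mm]; linarith
    have hM : 0 < M x y := by simp only [M]; linarith
    have hFM : F x y = 4 * (Mp x y - M x y) := by
      simp only [F, M, Mp, Mm]
      ring
    simp only [Dstar]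
    rw [Real.log_div hMp.ne' (by positivity), Real.log_mul two_ne_zero hM.ne',
      Real.log_div hMp.ne' hM.ne', Real.log_div hM.ne' hMp.ne', hFM]
    ring
  simp only [key, Finset.sum_sub_distrib, hF, ← Finset.mul_sum, Finset.sum_add_distrib, sub_zero]
end

section
/- Let p, q ∈ ℝᵏ be probability vectors on a finite set X of k points, let ε ∈ (0,1), and define F(x,y) = p(x)p(y)+q(x)q(y)−p(x)q(y)−q(x)p(y), M⁺(x,y) = (p(x)p(y)+q(x)q(y))/2 and M⁻(x,y) = (p(x)q(y)+q(x)p(y))/2. Then the supremum over all functions D : X×X → ℝ with ε ≤ D(x,y) ≤ 1 for all (x,y) of Σ_{x,y} F(x,y)·log D(x,y) equals (−log ε)·Σ_{x,y} |M⁺(x,y) − M⁻(x,y)|, and this supremum is attained by the discriminator D*(x,y) equal to 1 where F(x,y) ≥ 0 and equal to ε where F(x,y) < 0. -/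
open scoped BigOperators

theorem stmt5 {k : ℕ} (p q : Fin k → ℝ)
    (hp0 : ∀ x, 0 ≤ p x) (hp1 : ∑ x, p x = 1)
    (hq0 : ∀ x, 0 ≤ q x) (hq1 : ∑ x, q x = 1)
    (ε : ℝ) (hε : ε ∈ Set.Ioo (0 : ℝ) 1) :
    let F : Fin k → Fin k → ℝ := fun x y =>
      p x * p y + q x * q y - p x * q y - q x * p y
    let Mp : Fin k → Fin k → ℝ := fun x y => (p x * p y + q x * q y) / 2
    let Mm : Fin k → Fin k → ℝ := fun x y => (p x * q y + q x * p y) / 2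
    let Dstar : Fin k → Fin k → ℝ := fun x y => if 0 ≤ F x y then 1 else ε
    IsGreatest
        {v : ℝ | ∃ D : Fin k → Fin k → ℝ,
          (∀ x y, D x y ∈ Set.Icc ε 1) ∧
          v = ∑ x, ∑ y, F x y * Real.log (D x y)}
        ((-Real.log ε) * ∑ x, ∑ y, |Mp x y - Mm x y|)
    ∧ (∀ x y, Dstar x y ∈ Set.Icc ε 1)
    ∧ ∑ x, ∑ y, F x y * Real.log (Dstar x y)
        = (-Real.log ε) * ∑ x, ∑ y, |Mp x y - Mm x y| := by
  intro F Mp Mm Dstar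
  obtain ⟨h0, h1⟩ := hε
  have hL : Real.log ε < 0 := Real.log_neg h0 h1
  have hFsum : ∑ x, ∑ y, F x y = 0 := by
    have h : ∀ x y, F x y = (p x - q x) * (p y - q y) := fun x y => by
      simp only [F]; ring
    have h2 : ∑ y, (p y - q y) = 0 := by
      rw [Finset.sum_sub_distrib, hp1, hq1, sub_self]
    simp only [h, ← Finset.mul_sum, h2, mul_zero, Finset.sum_const_zero]
  have hM : ∀ x y, |Mp x y - Mm x y| = |F x y| / 2 := fun x y => by
    have : Mp x y - Mm x y = F x y / 2 := by simp only [Mp, Mm, F]; ring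
    rw [this, abs_div, abs_of_pos (two_pos : (0 : ℝ) < 2)]
  have hpt : ∀ x y, F x y * Real.log (Dstar x y)
      = (-Real.log ε) * |Mp x y - Mm x y| + (Real.log ε / 2) * F x y := fun x y => by
    rw [hM]
    by_cases h : 0 ≤ F x y
    · have hD : Dstar x y = 1 := if_pos h
      rw [hD, Real.log_one, abs_of_nonneg h]; ring
    · have hD : Dstar x y = ε := if_neg h
      rw [hD, abs_of_neg (not_le.mp h)]; ring
  have hDs : ∀ x y, Dstar x y ∈ Set.Icc ε 1 := fun x y => by
    by_cases h : 0 ≤ F x y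
    · have hD : Dstar x y = 1 := if_pos h
      rw [hD]; exact ⟨h1.le, le_rfl⟩
    · have hD : Dstar x y = ε := if_neg h
      rw [hD]; exact ⟨le_rfl, h1.le⟩
  have hval : ∑ x, ∑ y, F x y * Real.log (Dstar x y)
        = (-Real.log ε) * ∑ x, ∑ y, |Mp x y - Mm x y| := by
    simp only [hpt, Finset.sum_add_distrib, ← Finset.mul_sum, hFsum, mul_zero, add_zero]
  refine ⟨⟨⟨Dstar, hDs, hval.symm⟩, ?_⟩, hDs, hval⟩
  rintro v ⟨D, hD, rfl⟩
  rw [← hval]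
  refine Finset.sum_le_sum fun x _ => Finset.sum_le_sum fun y _ => ?_
  obtain ⟨ha, hb⟩ := hD x y
  by_cases h : 0 ≤ F x y
  · have hd : Dstar x y = 1 := if_pos h
    rw [hd]
    exact mul_le_mul_of_nonneg_left (Real.log_le_log (h0.trans_le ha) hb) h
  · have hd : Dstar x y = ε := if_neg h
    rw [hd]
    exact mul_le_mul_of_nonpos_left (Real.log_le_log h0 ha) (not_le.mp h).le
end

section
/- Let q : ℝⁿ → ℝᵏ be continuously differentiable with q(x; θ) > 0 for every coordinate x and every θ, and Σₓ q(x; θ) = 1 for every θ. Let p ∈ ℝᵏ be a strictly positive probability vector and define L_KL(θ) = Σₓ p(x)·log(p(x)/q(x; θ)). Then ∇L_KL(θ) = −Σₓ p(x)·∇_θ log q(x; θ), and consequently ‖Σₓ p(x)·∇_θ log q(x; θ) − Σₓ q(x; θ)·∇_θ log q(x; θ)‖² = ‖∇L_KL(θ)‖² for all θ. -/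
open scoped BigOperators

theorem stmt15 {n k : ℕ}
    (q : EuclideanSpace ℝ (Fin n) → Fin k → ℝ)
    (hdiff : ∀ x : Fin k, ContDiff ℝ 1 fun θ => q θ x)
    (hqpos : ∀ (x : Fin k) (θ : EuclideanSpace ℝ (Fin n)), 0 < q θ x)
    (hqsum : ∀ θ : EuclideanSpace ℝ (Fin n), ∑ x, q θ x = 1)
    (p : Fin k → ℝ) (hppos : ∀ x, 0 < p x) (hpsum : ∑ x, p x = 1) :
    ∀ θ : EuclideanSpace ℝ (Fin n),
      gradient (fun θ' => ∑ x, p x * Real.log (p x / q θ' x)) θ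
          = -∑ x, p x • ((q θ x)⁻¹ • gradient (fun θ' => q θ' x) θ)
      ∧ ‖(∑ x, p x • ((q θ x)⁻¹ • gradient (fun θ' => q θ' x) θ))
            - ∑ x, q θ x • ((q θ x)⁻¹ • gradient (fun θ' => q θ' x) θ)‖ ^ 2
          = ‖gradient (fun θ' => ∑ x, p x * Real.log (p x / q θ' x)) θ‖ ^ 2 := by
  intro θ
  have hd : ∀ x, HasFDerivAt (fun θ' => q θ' x) (fderiv ℝ (fun θ' => q θ' x) θ) θ := fun x =>
    (((hdiff x).differentiable one_ne_zero) θ).hasFDerivAt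
  have h1 : gradient (fun θ' => ∑ x, p x * Real.log (p x / q θ' x)) θ
      = -∑ x, p x • ((q θ x)⁻¹ • gradient (fun θ' => q θ' x) θ) := by
    have hfun : (fun θ' => ∑ x, p x * Real.log (p x / q θ' x))
        = fun θ' => ∑ x, p x * (Real.log (p x) - Real.log (q θ' x)) := by
      funext θ'
      refine Finset.sum_congr rfl fun x _ => ?_
      rw [Real.log_div (hppos x).ne' (hqpos x θ').ne']
    have hD : HasFDerivAt (fun θ' => ∑ x, p x * (Real.log (p x) - Real.log (q θ' x)))
        (∑ x, p x • (-((q θ x)⁻¹ • fderiv ℝ (fun θ' => q θ' x) θ))) θ := by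
      refine HasFDerivAt.fun_sum fun x _ => ?_
      exact (((hd x).log (hqpos x θ).ne').const_sub _).const_mul _
    rw [hfun]
    unfold gradient
    rw [hD.fderiv]
    simp [map_sum]
  have h2 : ∑ x, q θ x • ((q θ x)⁻¹ • gradient (fun θ' => q θ' x) θ) = 0 := by
    have hS : HasFDerivAt (fun θ' => ∑ x, q θ' x) (∑ x, fderiv ℝ (fun θ' => q θ' x) θ) θ :=
      HasFDerivAt.fun_sum fun x _ => hd x
    have hc : (fun θ' => ∑ x, q θ' x) = fun _ => (1 : ℝ) := funext hqsum
    rw [hc] at hS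
    have h0 := hS.unique (hasFDerivAt_const (1 : ℝ) θ)
    calc _ = ∑ x, gradient (fun θ' => q θ' x) θ :=
          Finset.sum_congr rfl fun x _ => smul_inv_smul₀ (hqpos x θ).ne' _
      _ = 0 := by
          unfold gradient
          rw [← map_sum, h0, map_zero]
  refine ⟨h1, ?_⟩
  rw [h1, h2, sub_zero, norm_neg]
end

section
/- Fix ψ ∈ ℝ. (a) For every real γ > 1, the function h(x) = −log(1 + exp(ψ·|x|^γ)) is differentiable at x = 0 with h'(0) = 0. (b) The function g(x) = −log(1 + exp(ψ·x)) is differentiable at x = 0 with g'(0) = −ψ/2; in particular g'(0) ≠ 0 whenever ψ ≠ 0. -/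
theorem stmt19 (ψ : ℝ) :
    (∀ γ : ℝ, 1 < γ →
      HasDerivAt (fun x : ℝ => -Real.log (1 + Real.exp (ψ * |x| ^ γ))) 0 0)
    ∧ HasDerivAt (fun x : ℝ => -Real.log (1 + Real.exp (ψ * x))) (-ψ / 2) 0
    ∧ (ψ ≠ 0 → -ψ / 2 ≠ 0) := by
  refine ⟨fun γ hγ => ?_, ?_, ?_⟩
  · have h := (((((hasDerivAt_abs_rpow 0 hγ).const_mul ψ).exp).const_add 1).log
      (by positivity)).fun_neg
    refine h.congr_deriv ?_
    simp
  · have h := (((((hasDerivAt_id (0:ℝ)).const_mul ψ).exp).const_add 1).log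
      (by positivity)).fun_neg
    refine h.congr_deriv ?_
    norm_num
    try ring
  · intro h h'
    apply h
    linarith
end
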